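/- Let v : ℝ → ℝ → ℝ be a smooth function of (x,t) with v(x,t) ≠ 0 and v_x(x,t) ≠ 0 for all (x,t), satisfying the 3rd potential Kupershmidt equation v_t = v_{5x} - 5·v_{xx}v_{4x}/v_x + 5·v_{xx}²v_{xxx}/v_x². Then both S := -v_{xxx}/v_x and S̄ := -v_{xxx}/v_x + 6·(v_{xx}/v - v_x²/v²) satisfy the Sawada-Kotera equation: S_t = S_{5x} + 5SS_{xxx} + 5S_xS_{xx} + 5S²S_x, and likewise with S replaced by S̄. -/

import Mathlib

/-!
Smooth functions of `(x, t)` form a commutative algebra on which `∂ₓ` and `∂ₜ` are commuting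
derivations, so the claim is an identity of differential algebra. In terms of `u = v_xx / v_x` and
`w = v_x / v` everything becomes polynomial:

* the equation for `v` reads `v_t = v_x P` with
  `P = u_xxx - u u_xx + 3 u_x² - 4 u² u_x + u⁴`;
* hence, with `Q = P_x + u P`, one has `v_xt = v_x Q`, `u_t = Q_x` and `w_t = w Q - w² P`;
* `w_x = w u - w²`, `S = -(u_x + u²)` and `S̄ = S + 6 w_x`.

The Sawada-Kotera equation for `S` is then a polynomial identity in the `x`-derivatives of `u`
(a Miura transformation), and the one for `S̄` a polynomial identity in these and `w`.
The algebraic part is `miura_fst` and `miura_snd`, combined in `sawadaKotera_algebraic`.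
-/

/-- Total `x`-derivative of a function of `(x, t)`. -/
noncomputable def dx (f : ℝ → ℝ → ℝ) : ℝ → ℝ → ℝ := fun x t => deriv (fun y => f y t) x

/-- Total `t`-derivative of a function of `(x, t)`. -/
noncomputable def dt (f : ℝ → ℝ → ℝ) : ℝ → ℝ → ℝ := fun x t => deriv (fun s => f x s) t

/-- The Sawada-Kotera equation. -/
def SawadaKotera (S : ℝ → ℝ → ℝ) : Prop :=
  ∀ x t, dt S x t =
    dx (dx (dx (dx (dx S)))) x t
    + 5 * S x t * dx (dx (dx S)) x t
    + 5 * dx S x t * dx (dx S) x t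
    + 5 * (S x t)^2 * dx S x t

/-- The 3rd potential Kupershmidt equation. -/
def Kup3 (v : ℝ → ℝ → ℝ) : Prop :=
  ∀ x t, dt v x t =
    dx (dx (dx (dx (dx v)))) x t
    - 5 * dx (dx v) x t * dx (dx (dx (dx v))) x t / dx v x t
    + 5 * (dx (dx v) x t)^2 * dx (dx (dx v)) x t / (dx v x t)^2

open scoped ContDiff

section Algebraic

variable {A : Type*} [CommRing A] [Algebra ℝ A] (D T : Derivation ℝ A A)

/-- The Sawada-Kotera equation for an element of an algebra, `D` and `T` standing for `∂ₓ`, `∂ₜ`. -/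
def AlgSK (S : A) : Prop :=
  T S = D (D (D (D (D S)))) + 5 * S * D (D (D S)) + 5 * D S * D (D S) + 5 * S ^ 2 * D S

/-- The polynomial `P` in `v_t = v_x P`, for `u = v_xx / v_x`. -/
def kupP (u : A) : A := D (D (D u)) - u * D (D u) + 3 * D u ^ 2 - 4 * u ^ 2 * D u + u ^ 4

/-- The polynomial `Q = P_x + u P` in `v_xt = v_x Q`. -/
def kupQ (u : A) : A := D (kupP D u) + u * kupP D u

lemma derivation_ofNat (E : Derivation ℝ A A) :
    E 3 = 0 ∧ E 4 = 0 ∧ E 6 = 0 :=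
  ⟨mod_cast E.map_natCast 3, mod_cast E.map_natCast 4, mod_cast E.map_natCast 6⟩

lemma miura_fst (hDT : ∀ a, T (D a) = D (T a)) (u : A) (hu : T u = D (kupQ D u)) :
    AlgSK D T (-(D u + u ^ 2)) := by
  obtain ⟨h3, h4, -⟩ := derivation_ofNat D
  unfold AlgSK
  simp only [map_neg, map_add, map_sub, hDT, hu, kupQ, kupP, Derivation.leibniz, smul_eq_mul,
    pow_succ, pow_zero, one_mul, h3, h4, mul_zero, add_zero]
  ring

lemma miura_snd (hDT : ∀ a, T (D a) = D (T a)) (u w : A) (hu : T u = D (kupQ D u))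
    (hw : D w = w * u - w ^ 2) (hTw : T w = w * kupQ D u - w ^ 2 * kupP D u) :
    AlgSK D T (-(D u + u ^ 2) + 6 * (w * u - w ^ 2)) := by
  obtain ⟨h3, h4, h6⟩ := derivation_ofNat D
  obtain ⟨-, -, t6⟩ := derivation_ofNat T
  have hS := miura_fst D T hDT u hu
  -- The successive `x`-derivatives of `w`, each expressed through the previous ones.
  obtain ⟨w1, e1⟩ : ∃ w1, D w = w1 := ⟨_, rfl⟩
  obtain ⟨w2, e2⟩ : ∃ w2, D w1 = w2 := ⟨_, rfl⟩
  obtain ⟨w3, e3⟩ : ∃ w3, D w2 = w3 := ⟨_, rfl⟩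
  obtain ⟨w4, e4⟩ : ∃ w4, D w3 = w4 := ⟨_, rfl⟩
  obtain ⟨w5, e5⟩ : ∃ w5, D w4 = w5 := ⟨_, rfl⟩
  obtain ⟨w6, e6⟩ : ∃ w6, D w5 = w6 := ⟨_, rfl⟩
  have r1 : w1 = w * u - w * w := by rw [← e1, hw]; ring
  have r2 := congrArg D r1
  simp only [map_sub, Derivation.leibniz, smul_eq_mul, e1, e2] at r2
  have r3 := congrArg D r2
  simp only [map_add, map_sub, Derivation.leibniz, smul_eq_mul, e1, e2, e3] at r3
  have r4 := congrArg D r3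
  simp only [map_add, map_sub, Derivation.leibniz, smul_eq_mul, e1, e2, e3, e4] at r4
  have r5 := congrArg D r4
  simp only [map_add, map_sub, Derivation.leibniz, smul_eq_mul, e1, e2, e3, e4, e5] at r5
  have r6 := congrArg D r5
  simp only [map_add, map_sub, Derivation.leibniz, smul_eq_mul, e1, e2, e3, e4, e5, e6] at r6
  rw [← hw, e1]
  have hTw1 : T w1 = D (w * kupQ D u - w ^ 2 * kupP D u) := by rw [← e1, hDT, hTw]
  unfold AlgSK at hS ⊢
  rw [map_add T, hS]
  -- Both sides become polynomials in `w` and the derivatives of `u`.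
  simp only [map_neg, map_add, map_sub, hTw1, kupQ, kupP, Derivation.leibniz, smul_eq_mul,
    pow_succ, pow_zero, one_mul, h3, h4, h6, t6, mul_zero, add_zero,
    e1, e2, e3, e4, e5, e6]
  clear hS hTw1 e1 e2 e3 e4 e5 e6 hw hTw hu
  generalize D (D (D (D (D u)))) = u5 at *
  generalize D (D (D (D u))) = u4 at *
  generalize D (D (D u)) = u3 at *
  generalize D (D u) = u2 at *
  generalize D u = u1 at *
  subst r6 r5 r4 r3 r2 r1
  ring

/-- The theorem in differential-algebraic form; `q` and `r` are the inverses of `v_x` and `v`. -/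
lemma sawadaKotera_algebraic (hDT : ∀ a, T (D a) = D (T a)) (v q r : A)
    (hq : D v * q = 1) (hr : v * r = 1)
    (hv : T v = D (D (D (D (D v)))) - 5 * D (D v) * D (D (D (D v))) * q
      + 5 * D (D v) ^ 2 * D (D (D v)) * q ^ 2) :
    AlgSK D T (-D (D (D v)) * q) ∧
    AlgSK D T (-D (D (D v)) * q + 6 * (D (D v) * r - D v ^ 2 * r ^ 2)) := by
  have inv_rule (E : Derivation ℝ A A) (a b : A) (h : a * b = 1) : E b = -b ^ 2 * E a := by
    have h1 := congrArg E h
    simp only [Derivation.leibniz, smul_eq_mul, Derivation.map_one_eq_zero] at h1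
    linear_combination b * h1 - E b * h
  obtain ⟨p, hp⟩ : ∃ p, p = D v := ⟨_, rfl⟩
  obtain ⟨u, hu⟩ : ∃ u, u = D p * q := ⟨_, rfl⟩
  obtain ⟨w, hw⟩ : ∃ w, w = p * r := ⟨_, rfl⟩
  rw [← hp] at hq hv ⊢
  have hDp : D p = p * u := by rw [hu]; linear_combination -D p * hq
  have hDDp : D (D p) = p * (D u + u ^ 2) := by
    simp only [hDp, Derivation.leibniz, smul_eq_mul]; ring
  have hTv : T v = p * kupP D u := by
    rw [hv]
    simp only [hDp, kupP, Derivation.leibniz, smul_eq_mul, map_add]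
    generalize D (D (D u)) = u3
    generalize D (D u) = u2
    generalize D u = u1
    linear_combination (-5 * u * (u2 + 3 * u * u1 + u ^ 3) * p
      + 5 * u ^ 2 * (u1 + u ^ 2) * p * (p * q + 1)) * hq
  have hTp : T p = p * kupQ D u := by
    rw [hp, hDT, hTv, Derivation.leibniz, ← hp, hDp, kupQ]
    simp only [smul_eq_mul]; ring
  have hTu : T u = D (kupQ D u) := by
    rw [hu, Derivation.leibniz, inv_rule T p q hq, hDT, hTp, Derivation.leibniz, ← hu, hDp]
    simp only [smul_eq_mul]
    linear_combination (D (kupQ D u) - p * q * u * kupQ D u) * hq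
  have hDw : D w = w * u - w ^ 2 := by
    rw [hw, Derivation.leibniz, inv_rule D v r hr, ← hp, hDp]
    simp only [smul_eq_mul]; ring
  have hTw : T w = w * kupQ D u - w ^ 2 * kupP D u := by
    rw [hw, Derivation.leibniz, inv_rule T v r hr, hTv, hTp]
    simp only [smul_eq_mul]; ring
  have hS : -D (D p) * q = -(D u + u ^ 2) := by
    rw [hDDp]; linear_combination -(D u + u ^ 2) * hq
  have hW : D p * r - p ^ 2 * r ^ 2 = w * u - w ^ 2 := by
    rw [hDp, hw]; ring
  rw [hS, hW]
  exact ⟨miura_fst D T hDT u hTu, miura_snd D T hDT u w hTu hDw hTw⟩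

end Algebraic

section Smooth

/-- The algebra of smooth functions of `(x, t)`, in curried form. -/
def smoothAlg : Subalgebra ℝ (ℝ → ℝ → ℝ) where
  carrier := {f | ContDiff ℝ ∞ (fun p : ℝ × ℝ => f p.1 p.2)}
  mul_mem' (hf : ContDiff ℝ ∞ _) (hg : ContDiff ℝ ∞ _) := ContDiff.mul hf hg
  add_mem' (hf : ContDiff ℝ ∞ _) (hg : ContDiff ℝ ∞ _) := ContDiff.add hf hg
  algebraMap_mem' c := show ContDiff ℝ ∞ (fun _ : ℝ × ℝ => c) from contDiff_const

lemma smooth_fst {f : ℝ → ℝ → ℝ} (hf : f ∈ smoothAlg) (x t : ℝ) :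
    HasDerivAt (fun y => f y t)
      (fderiv ℝ (fun p : ℝ × ℝ => f p.1 p.2) (x, t) (1, 0)) x := by
  have h1 : ContDiff ℝ ∞ (fun p : ℝ × ℝ => f p.1 p.2) := hf
  have h := (h1.differentiable (by simp) (x, t)).hasFDerivAt
  exact h.comp_hasDerivAt (f := fun y => (y, t)) x ((hasDerivAt_id x).prodMk (hasDerivAt_const x t))

lemma smooth_snd {f : ℝ → ℝ → ℝ} (hf : f ∈ smoothAlg) (x t : ℝ) :
    HasDerivAt (fun s => f x s)
      (fderiv ℝ (fun p : ℝ × ℝ => f p.1 p.2) (x, t) (0, 1)) t := by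
  have h1 : ContDiff ℝ ∞ (fun p : ℝ × ℝ => f p.1 p.2) := hf
  have h := (h1.differentiable (by simp) (x, t)).hasFDerivAt
  exact h.comp_hasDerivAt (f := fun s => (x, s)) t ((hasDerivAt_const t x).prodMk (hasDerivAt_id t))

lemma dx_eq {f : ℝ → ℝ → ℝ} (hf : f ∈ smoothAlg) (x t : ℝ) :
    dx f x t = fderiv ℝ (fun p : ℝ × ℝ => f p.1 p.2) (x, t) (1, 0) :=
  (smooth_fst hf x t).deriv

lemma dt_eq {f : ℝ → ℝ → ℝ} (hf : f ∈ smoothAlg) (x t : ℝ) :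
    dt f x t = fderiv ℝ (fun p : ℝ × ℝ => f p.1 p.2) (x, t) (0, 1) :=
  (smooth_snd hf x t).deriv

lemma contDiff_fderiv_apply_const {F : ℝ × ℝ → ℝ} (hF : ContDiff ℝ ∞ F) (e : ℝ × ℝ) :
    ContDiff ℝ ∞ (fun p => fderiv ℝ F p e) :=
  (hF.fderiv_right (m := ∞) (by simp)).clm_apply contDiff_const

lemma dx_mem {f : ℝ → ℝ → ℝ} (hf : f ∈ smoothAlg) : dx f ∈ smoothAlg := by
  change ContDiff ℝ ∞ (fun p : ℝ × ℝ => dx f p.1 p.2)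
  simp only [dx_eq hf]
  exact contDiff_fderiv_apply_const hf _

lemma dt_mem {f : ℝ → ℝ → ℝ} (hf : f ∈ smoothAlg) : dt f ∈ smoothAlg := by
  change ContDiff ℝ ∞ (fun p : ℝ × ℝ => dt f p.1 p.2)
  simp only [dt_eq hf]
  exact contDiff_fderiv_apply_const hf _

lemma inv_mem {f : ℝ → ℝ → ℝ} (hf : f ∈ smoothAlg) (h0 : ∀ x t, f x t ≠ 0) :
    (fun x t => (f x t)⁻¹) ∈ smoothAlg :=
  ContDiff.inv (show ContDiff ℝ ∞ (fun p : ℝ × ℝ => f p.1 p.2) from hf) fun p => h0 p.1 p.2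

/-- Symmetry of second derivatives. -/
lemma dt_dx_comm {f : ℝ → ℝ → ℝ} (hf : f ∈ smoothAlg) : dt (dx f) = dx (dt f) := by
  have hF : ContDiff ℝ ∞ (fun p : ℝ × ℝ => f p.1 p.2) := hf
  have hd : Differentiable ℝ (fderiv ℝ (fun p : ℝ × ℝ => f p.1 p.2)) :=
    (hF.fderiv_right (m := ∞) (by simp)).differentiable (by simp)
  funext x t
  rw [dt_eq (dx_mem hf), dx_eq (dt_mem hf)]
  simp only [dx_eq hf, dt_eq hf, Prod.mk.eta]
  rw [fderiv_clm_apply (hd _) (differentiableAt_const _),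
    fderiv_clm_apply (hd _) (differentiableAt_const _)]
  have hs : IsSymmSndFDerivAt ℝ (fun p : ℝ × ℝ => f p.1 p.2) (x, t) :=
    hF.contDiffAt.isSymmSndFDerivAt (by
      rw [minSmoothness_of_isRCLikeNormedField]
      exact WithTop.coe_le_coe.2 le_top)
  simpa using hs (0, 1) (1, 0)

/-- `∂ₓ` as a derivation of the algebra of smooth functions. -/
noncomputable def derivX : Derivation ℝ smoothAlg smoothAlg :=
  Derivation.mk'
    { toFun := fun f => ⟨dx f, dx_mem f.2⟩
      map_add' := fun f g => by
        ext x t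
        exact ((smooth_fst f.2 x t).differentiableAt.hasDerivAt.add
          (smooth_fst g.2 x t).differentiableAt.hasDerivAt).deriv
      map_smul' := fun c f => by
        ext x t
        exact ((smooth_fst f.2 x t).differentiableAt.hasDerivAt.const_mul c).deriv }
    fun f g => by
      ext x t
      refine ((smooth_fst f.2 x t).differentiableAt.hasDerivAt.mul
        (smooth_fst g.2 x t).differentiableAt.hasDerivAt).deriv.trans ?_
      change dx f x t * (g : ℝ → ℝ → ℝ) x t + (f : ℝ → ℝ → ℝ) x t * dx g x t
        = (f : ℝ → ℝ → ℝ) x t * dx g x t + (g : ℝ → ℝ → ℝ) x t * dx f x t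
      ring

/-- `∂ₜ` as a derivation of the algebra of smooth functions. -/
noncomputable def derivT : Derivation ℝ smoothAlg smoothAlg :=
  Derivation.mk'
    { toFun := fun f => ⟨dt f, dt_mem f.2⟩
      map_add' := fun f g => by
        ext x t
        exact ((smooth_snd f.2 x t).differentiableAt.hasDerivAt.add
          (smooth_snd g.2 x t).differentiableAt.hasDerivAt).deriv
      map_smul' := fun c f => by
        ext x t
        exact ((smooth_snd f.2 x t).differentiableAt.hasDerivAt.const_mul c).deriv }
    fun f g => by
      ext x t
      refine ((smooth_snd f.2 x t).differentiableAt.hasDerivAt.mul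
        (smooth_snd g.2 x t).differentiableAt.hasDerivAt).deriv.trans ?_
      change dt f x t * (g : ℝ → ℝ → ℝ) x t + (f : ℝ → ℝ → ℝ) x t * dt g x t
        = (f : ℝ → ℝ → ℝ) x t * dt g x t + (g : ℝ → ℝ → ℝ) x t * dt f x t
      ring

lemma sawadaKotera_of_algSK (S : smoothAlg) (h : AlgSK derivX derivT S) :
    SawadaKotera (S : ℝ → ℝ → ℝ) := fun x t =>
  congrFun (congrFun (congrArg Subtype.val h) x) t

end Smooth

/-- Proposition 4 g): `S = -v_xxx/v_x` and `S̄ = S + 6[ln v]_xx` both solve the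
Sawada-Kotera equation. -/
theorem sawada_kotera_nonlocal_invariance
    (v : ℝ → ℝ → ℝ)
    (hv : ContDiff ℝ (⊤ : ℕ∞) (fun p : ℝ × ℝ => v p.1 p.2))
    (hne : ∀ x t, v x t ≠ 0)
    (hvx : ∀ x t, dx v x t ≠ 0)
    (heq : Kup3 v) :
    SawadaKotera (fun x t => -(dx (dx (dx v)) x t) / dx v x t) ∧
    SawadaKotera (fun x t => -(dx (dx (dx v)) x t) / dx v x t
      + 6 * (dx (dx v) x t / v x t - (dx v x t)^2 / (v x t)^2)) := by
  have hm : v ∈ smoothAlg := hv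
  let V : smoothAlg := ⟨v, hm⟩
  let q : smoothAlg := ⟨_, inv_mem (dx_mem hm) hvx⟩
  let r : smoothAlg := ⟨_, inv_mem hm hne⟩
  obtain ⟨h1, h2⟩ := sawadaKotera_algebraic derivX derivT
    (fun f => Subtype.ext (dt_dx_comm f.2)) V q r
    (by ext x t; exact mul_inv_cancel₀ (hvx x t))
    (by ext x t; exact mul_inv_cancel₀ (hne x t))
    (by
      ext x t
      refine (heq x t).trans ?_
      rw [div_eq_mul_inv, div_eq_mul_inv, ← inv_pow]
      rfl)
  constructor
  · convert sawadaKotera_of_algSK _ h1 using 1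
    funext x t
    rw [div_eq_mul_inv]
    rfl
  · convert sawadaKotera_of_algSK _ h2 using 1
    funext x t
    rw [div_eq_mul_inv, div_eq_mul_inv, div_eq_mul_inv, ← inv_pow]
    rfl
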